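/- Let L_{K3[3]} = U ⊕ U ⊕ U ⊕ E₈ ⊕ E₈ ⊕ [−4] (an even lattice of signature (3, 20)). Let H, D ∈ L_{K3[3]} be orthogonal primitive vectors with H² = 4, div(H, L) = 2, D² = −12, div(D, L) = 2. Then (H + D)/2 lies in L_{K3[3]}-rational span and the ℤ-module M generated by H and (H+D)/2 is an even lattice containing ⟨H, D⟩ with index 2, M has Gram matrix [[4, 2], [2, −2]] in the basis (H, (H+D)/2), M has determinant −12, and M admits no proper even overlattice in M ⊗ ℚ. -/

import Mathlib

/-- Gram matrix of the negative definite `E₈` root lattice. -/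
def E8M : Matrix (Fin 8) (Fin 8) ℤ :=
  !![-2, 0, 1, 0, 0, 0, 0, 0;
      0, -2, 0, 1, 0, 0, 0, 0;
      1, 0, -2, 1, 0, 0, 0, 0;
      0, 1, 1, -2, 1, 0, 0, 0;
      0, 0, 0, 1, -2, 1, 0, 0;
      0, 0, 0, 0, 1, -2, 1, 0;
      0, 0, 0, 0, 0, 1, -2, 1;
      0, 0, 0, 0, 0, 0, 1, -2]

/-- Index type for `L_{K3[3]} = U^{⊕3} ⊕ E₈^{⊕2} ⊕ [-4]`, of rank 23. -/
abbrev I33 : Type := (Fin 3 × Fin 2) ⊕ ((Fin 2 × Fin 8) ⊕ Fin 1)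

/-- Gram matrix of `L_{K3[3]} = U^{⊕3} ⊕ E₈^{⊕2} ⊕ [-4]`. -/
def g33 : I33 → I33 → ℤ
  | Sum.inl (a, i), Sum.inl (b, j) => if a = b ∧ i ≠ j then 1 else 0
  | Sum.inr (Sum.inl (a, i)), Sum.inr (Sum.inl (b, j)) => if a = b then E8M i j else 0
  | Sum.inr (Sum.inr _), Sum.inr (Sum.inr _) => -4
  | _, _ => 0

/-- The bilinear form of `L_{K3[3]}` extended to `L_{K3[3]} ⊗ ℚ`. -/
def bfQ (x y : I33 → ℚ) : ℚ := ∑ i : I33, ∑ j : I33, x i * (g33 i j : ℚ) * y j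

/-- The lattice `L_{K3[3]}` sitting inside `L_{K3[3]} ⊗ ℚ` as the integral points. -/
def L33 : Submodule ℤ (I33 → ℚ) :=
  LinearMap.range (LinearMap.pi fun i =>
    ((Int.castAddHom ℚ).toIntLinearMap.comp (LinearMap.proj i) :
      (I33 → ℤ) →ₗ[ℤ] ℚ))

/-- `v` is a primitive vector of the set `S`. -/
def PrimVec (S : Set (I33 → ℚ)) (v : I33 → ℚ) : Prop :=
  v ∈ S ∧ ∀ (n : ℤ) (w : I33 → ℚ), w ∈ S → v = n • w → IsUnit n

theorem g33_symm (i j : I33) : g33 i j = g33 j i := by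
  revert i j
  decide

theorem bfQ_comm (x y : I33 → ℚ) : bfQ x y = bfQ y x := by
  unfold bfQ
  rw [Finset.sum_comm]
  refine Finset.sum_congr rfl fun i _ => Finset.sum_congr rfl fun j _ => ?_
  rw [g33_symm j i]
  ring

theorem bfQ_comb_left (a b : ℚ) (x y z : I33 → ℚ) :
    bfQ (a • x + b • y) z = a * bfQ x z + b * bfQ y z := by
  simp only [bfQ, Finset.mul_sum, ← Finset.sum_add_distrib]
  refine Finset.sum_congr rfl fun i _ => Finset.sum_congr rfl fun j _ => ?_
  simp only [Pi.add_apply, Pi.smul_apply, smul_eq_mul]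
  ring

theorem bfQ_comb_right (a b : ℚ) (x y z : I33 → ℚ) :
    bfQ z (a • x + b • y) = a * bfQ z x + b * bfQ z y := by
  rw [bfQ_comm, bfQ_comb_left, bfQ_comm x, bfQ_comm y]

theorem mem_L33_iff (x : I33 → ℚ) : x ∈ L33 ↔ ∃ h : I33 → ℤ, x = fun i => (h i : ℚ) := by
  constructor
  · rintro ⟨h, rfl⟩
    exact ⟨h, rfl⟩
  · rintro ⟨h, rfl⟩
    exact ⟨h, rfl⟩

/-- Pairing an integral vector with a standard basis vector. -/
theorem bfQ_intCast_single (h : I33 → ℤ) (i : I33) :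
    bfQ (fun j => (h j : ℚ)) (fun j => ((Pi.single i 1 : I33 → ℤ) j : ℚ)) =
      ((∑ j, h j * g33 j i : ℤ) : ℚ) := by
  simp [bfQ, Pi.single_apply]

/-- If `h` pairs evenly with `L_{K3[3]}`, then its component in the unimodular summand
`U^{⊕3} ⊕ E₈^{⊕2}` is divisible by `2`. -/
theorem two_dvd_unimodular_part (h : I33 → ℤ) (hh : ∀ i, 2 ∣ ∑ j, h j * g33 j i) :
    (∀ p, 2 ∣ h (Sum.inl p)) ∧ ∀ p, 2 ∣ h (Sum.inr (Sum.inl p)) := by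
  constructor
  · rintro ⟨a, i⟩
    have hU := hh (Sum.inl (a, 1 - i))
    fin_cases a <;> fin_cases i <;>
      simpa [Fintype.sum_sum_type, Fintype.sum_prod_type, Fin.sum_univ_succ, g33] using hU
  · rintro ⟨a, i⟩
    have hE (k : Fin 8) : 2 ∣ ∑ j, h (Sum.inr (Sum.inl (a, j))) * E8M j k := by
      have hk := hh (Sum.inr (Sum.inl (a, k)))
      simpa [Fintype.sum_sum_type, Fintype.sum_prod_type, g33, Finset.sum_ite_irrel,
        ← Finset.sum_mul] using hk
    have h0 := hE 0
    have h1 := hE 1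
    have h2 := hE 2
    have h3 := hE 3
    have h4 := hE 4
    have h5 := hE 5
    have h6 := hE 6
    have h7 := hE 7
    simp [Fin.sum_univ_eight, E8M] at h0 h1 h2 h3 h4 h5 h6 h7
    fin_cases i <;> simp <;> omega

/-- A primitive vector of `L_{K3[3]}` of even divisibility has even coordinates except for the
coordinate along the summand `[-4]`, which is odd. -/
theorem exists_parity_of_primVec {x : I33 → ℚ} (hx : PrimVec (L33 : Set (I33 → ℚ)) x)
    (hdiv : ∀ y ∈ L33, ∃ k : ℤ, bfQ x y = 2 * (k : ℚ)) :
    ∃ h : I33 → ℤ, (x = fun i => (h i : ℚ)) ∧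
      (∀ p, 2 ∣ h (Sum.inl p)) ∧ (∀ p, 2 ∣ h (Sum.inr (Sum.inl p))) ∧
      ∀ p, ¬ 2 ∣ h (Sum.inr (Sum.inr p)) := by
  obtain ⟨h, rfl⟩ := (mem_L33_iff x).1 hx.1
  have heven (i : I33) : 2 ∣ ∑ j, h j * g33 j i := by
    obtain ⟨k, hk⟩ := hdiv _ ((mem_L33_iff _).2 ⟨Pi.single i 1, rfl⟩)
    rw [bfQ_intCast_single] at hk
    exact ⟨k, by exact_mod_cast hk⟩
  obtain ⟨hU, hE⟩ := two_dvd_unimodular_part h heven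
  refine ⟨h, rfl, hU, hE, fun p hp => ?_⟩
  have hall : ∀ i, 2 ∣ h i := by
    rintro (q | q | q)
    · exact hU q
    · exact hE q
    · rwa [Subsingleton.elim q p]
  choose w hw using hall
  have hunit := hx.2 2 (fun i => (w i : ℚ)) ((mem_L33_iff _).2 ⟨w, rfl⟩) (by
    funext i
    simp [hw i])
  exact absurd hunit (by decide)

theorem exists_half_add_mem_L33 {H D : I33 → ℚ}
    (hHprim : PrimVec (L33 : Set (I33 → ℚ)) H) (hDprim : PrimVec (L33 : Set (I33 → ℚ)) D)
    (hHdiv : ∀ y ∈ L33, ∃ k : ℤ, bfQ H y = 2 * (k : ℚ))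
    (hDdiv : ∀ y ∈ L33, ∃ k : ℤ, bfQ D y = 2 * (k : ℚ)) :
    ∃ E ∈ L33, (2 : ℚ) • E = H + D := by
  obtain ⟨h, rfl, hU, hE, hN⟩ := exists_parity_of_primVec hHprim hHdiv
  obtain ⟨d, rfl, dU, dE, dN⟩ := exists_parity_of_primVec hDprim hDdiv
  have hall : ∀ i, 2 ∣ h i + d i := by
    rintro (q | q | q)
    · exact dvd_add (hU q) (dU q)
    · exact dvd_add (hE q) (dE q)
    · have := hN q
      have := dN q
      omega
  choose w hw using hall
  refine ⟨fun i => (w i : ℚ), (mem_L33_iff _).2 ⟨w, rfl⟩, ?_⟩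
  funext i
  have := hw i
  simp only [Pi.smul_apply, Pi.add_apply, smul_eq_mul]
  exact_mod_cast this.symm

/-- The arithmetic behind maximality of the lattice with Gram matrix `[[4, 2], [2, -2]]`: an
element of the dual lattice with even square is in the lattice. -/
theorem exists_int_coords_of_even {a b : ℚ} {p q k : ℤ} (hp : 4 * a + 2 * b = p)
    (hq : 2 * a - 2 * b = q) (hk : 4 * a ^ 2 + 4 * a * b - 2 * b ^ 2 = 2 * k) :
    ∃ m n : ℤ, a = m ∧ b = n := by
  have ha : a = (p + q) / 6 := by linarith
  have hb : b = (p - 2 * q) / 6 := by linarith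
  have key : p ^ 2 + 2 * p * q - 2 * q ^ 2 = 12 * k := by
    rw [ha, hb] at hk
    have : (p : ℚ) ^ 2 + 2 * p * q - 2 * q ^ 2 = 12 * k := by linarith
    exact_mod_cast this
  have hp2 : (2 : ℤ) ∣ p :=
    Int.prime_two.dvd_of_dvd_pow (n := 2) ⟨6 * k - p * q + q ^ 2, by linarith⟩
  obtain ⟨r, rfl⟩ := hp2
  have hq2 : (2 : ℤ) ∣ q :=
    Int.prime_two.dvd_of_dvd_pow (n := 2) ⟨r ^ 2 + r * q - 3 * k, by linarith⟩
  obtain ⟨s, rfl⟩ := hq2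
  have h3 : (3 : ℤ) ∣ r + s :=
    Int.prime_three.dvd_of_dvd_pow (n := 2) ⟨k + s ^ 2, by linarith⟩
  obtain ⟨m, hm⟩ := h3
  obtain rfl : r = 3 * m - s := by linarith
  refine ⟨m, m - s, ?_, ?_⟩
  · rw [ha]
    push_cast
    ring
  · rw [hb]
    push_cast
    ring

/-- for orthogonal primitive vectors `H, D ∈ L_{K3[3]}` of types
`(4, 2)` and `(-12, 2)`, the vector `E = (H+D)/2` lies in `L_{K3[3]}`, the lattice
`M = ⟨H, E⟩` is even, contains `⟨H, D⟩` with index 2, has Gram matrix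
`[[4,2],[2,-2]]` in the basis `(H, E)`, determinant `-12`, and admits no proper
even overlattice in `M ⊗ ℚ`. -/
theorem stmt_7 (H D : I33 → ℚ) (hH : H ∈ L33) (hD : D ∈ L33)
    (hHprim : PrimVec (L33 : Set (I33 → ℚ)) H)
    (hDprim : PrimVec (L33 : Set (I33 → ℚ)) D)
    (horth : bfQ H D = 0) (hH2 : bfQ H H = 4) (hD2 : bfQ D D = -12)
    (hHdiv : (∀ y ∈ L33, ∃ k : ℤ, bfQ H y = 2 * (k : ℚ)) ∧ ∃ y ∈ L33, bfQ H y = 2)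
    (hDdiv : (∀ y ∈ L33, ∃ k : ℤ, bfQ D y = 2 * (k : ℚ)) ∧ ∃ y ∈ L33, bfQ D y = 2) :
    ∃ E : I33 → ℚ, E ∈ L33 ∧ (2 : ℚ) • E = H + D ∧
      bfQ H E = 2 ∧ bfQ E E = -2 ∧
      E ∉ Submodule.span ℤ ({H, D} : Set (I33 → ℚ)) ∧
      Submodule.span ℤ ({H, D} : Set (I33 → ℚ)) ≤
        Submodule.span ℤ ({H, E} : Set (I33 → ℚ)) ∧
      (∀ x ∈ Submodule.span ℤ ({H, E} : Set (I33 → ℚ)),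
        x ∈ Submodule.span ℤ ({H, D} : Set (I33 → ℚ)) ∨
          x - E ∈ Submodule.span ℤ ({H, D} : Set (I33 → ℚ))) ∧
      (∀ x ∈ Submodule.span ℤ ({H, E} : Set (I33 → ℚ)), ∃ k : ℤ,
        bfQ x x = 2 * (k : ℚ)) ∧
      bfQ H H * bfQ E E - bfQ H E * bfQ H E = -12 ∧
      (∀ M' : Submodule ℤ (I33 → ℚ),
        Submodule.span ℤ ({H, E} : Set (I33 → ℚ)) ≤ M' →
        (M' : Set (I33 → ℚ)) ⊆
          (Submodule.span ℚ ({H, E} : Set (I33 → ℚ)) : Set (I33 → ℚ)) →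
        (∀ x ∈ M', ∀ y ∈ M', ∃ n : ℤ, bfQ x y = (n : ℚ)) →
        (∀ x ∈ M', ∃ k : ℤ, bfQ x x = 2 * (k : ℚ)) →
        M' = Submodule.span ℤ ({H, E} : Set (I33 → ℚ))) := by
  obtain ⟨E, hE, hE2⟩ := exists_half_add_mem_L33 hHprim hDprim hHdiv.1 hDdiv.1
  have hED : E = (1 / 2 : ℚ) • H + (1 / 2 : ℚ) • D := by
    rw [← smul_add, ← hE2, smul_smul]
    norm_num
  have hDE : D = (2 : ℚ) • E - H := by rw [hE2, add_sub_cancel_left]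
  have hHE : bfQ H E = 2 := by
    rw [hED, bfQ_comb_right, hH2, horth]
    norm_num
  have hDE' : bfQ D E = -6 := by
    rw [hED, bfQ_comb_right, bfQ_comm D H, horth, hD2]
    norm_num
  have hEE : bfQ E E = -2 := by
    have h := bfQ_comb_left (1 / 2) (1 / 2) H D E
    rw [← hED, hHE, hDE'] at h
    rw [h]
    norm_num
  have hEH : bfQ E H = 2 := by rw [bfQ_comm, hHE]
  have hsq (a b : ℚ) :
      bfQ (a • H + b • E) (a • H + b • E) = 4 * a ^ 2 + 4 * a * b - 2 * b ^ 2 := by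
    rw [bfQ_comb_left, bfQ_comb_right, bfQ_comb_right, hH2, hHE, hEH, hEE]
    ring
  refine ⟨E, hE, hE2, hHE, hEE, ?_, ?_, ?_, ?_, ?_, ?_⟩
  · intro hmem
    obtain ⟨m, n, hmn⟩ := Submodule.mem_span_pair.1 hmem
    rw [← Int.cast_smul_eq_zsmul ℚ, ← Int.cast_smul_eq_zsmul ℚ] at hmn
    rw [← hmn, bfQ_comb_right, hH2, horth] at hHE
    have h : m * 4 = 2 := by
      have : (m : ℚ) * 4 = 2 := by linarith
      exact_mod_cast this
    omega
  · rw [Submodule.span_le]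
    rintro x (rfl | rfl)
    · exact Submodule.subset_span (by simp)
    · refine Submodule.mem_span_pair.2 ⟨-1, 2, ?_⟩
      rw [hDE]
      module
  · intro x hx
    obtain ⟨m, n, rfl⟩ := Submodule.mem_span_pair.1 hx
    rcases Int.even_or_odd' n with ⟨c, rfl | rfl⟩
    · left
      refine Submodule.mem_span_pair.2 ⟨m + c, c, ?_⟩
      rw [hDE]
      module
    · right
      refine Submodule.mem_span_pair.2 ⟨m + c, c, ?_⟩
      rw [hDE]
      module
  · intro x hx
    obtain ⟨m, n, rfl⟩ := Submodule.mem_span_pair.1 hx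
    refine ⟨2 * m ^ 2 + 2 * m * n - n ^ 2, ?_⟩
    rw [← Int.cast_smul_eq_zsmul ℚ, ← Int.cast_smul_eq_zsmul ℚ, hsq]
    push_cast
    ring
  · rw [hH2, hEE, hHE]
    norm_num
  · intro M' hle hsub hint heven
    refine le_antisymm (fun x hx => ?_) hle
    obtain ⟨a, b, rfl⟩ := Submodule.mem_span_pair.1 (hsub hx)
    obtain ⟨p, hp⟩ := hint _ hx H (hle (Submodule.subset_span (by simp)))
    obtain ⟨q, hq⟩ := hint _ hx E (hle (Submodule.subset_span (by simp)))
    obtain ⟨k, hk⟩ := heven _ hx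
    rw [bfQ_comb_left, hH2, hEH] at hp
    rw [bfQ_comb_left, hHE, hEE] at hq
    rw [hsq] at hk
    obtain ⟨m, n, rfl, rfl⟩ :=
      exists_int_coords_of_even (by linarith : 4 * a + 2 * b = p)
        (by linarith : 2 * a - 2 * b = q) hk
    refine Submodule.mem_span_pair.2 ⟨m, n, ?_⟩
    rw [Int.cast_smul_eq_zsmul ℚ, Int.cast_smul_eq_zsmul ℚ]
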